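/- Let n ≥ 1. In ℚ[x_1,…,x_n,y_1,…,y_n] set Φ_n := ∏_{1≤i<j≤n}(x_i − y_j); set c_i := ½(σ_i(x_1,…,x_n) + σ_i(y_1,…,y_n)) for 0 ≤ i ≤ n (σ_i the i-th elementary symmetric polynomial, σ_0 = 1, so c_0 = 1) and c_i := 0 for i < 0 or i > n; and set Γ_n := det((c_{n+1+j−2i})_{1≤i,j≤n}). The hyperoctahedral group W_n of signed permutations of {1,…,n} acts on ℚ[x_1,…,x_n] by signed permutation of the variables; for w ∈ W_n let e_w be the substitution fixing each x_i and sending y_j to w(x_j). Then e_{id}(Φ_n·Γ_n) = ∏_{1≤i<j≤n}(x_i − x_j)(x_i + x_j) · ∏_{i=1}^n x_i, the product of the positive roots of SO_{2n+1}, while e_w(Φ_n·Γ_n) = 0 for every w ≠ id. -/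

import Mathlib

open MvPolynomial Finset

/-- `Φ_n := ∏_{1≤i<j≤n} (x_i − y_j)` in `ℚ[x_1,…,x_n,y_1,…,y_n]`, where the `x`-variables
are indexed by `Sum.inl` and the `y`-variables by `Sum.inr`. -/
noncomputable def PhiB (n : ℕ) : MvPolynomial (Fin n ⊕ Fin n) ℚ :=
  ∏ i : Fin n, ∏ j ∈ Finset.Ioi i, (X (Sum.inl i) - X (Sum.inr j))

/-- `c_k := ½(σ_k(x_1,…,x_n) + σ_k(y_1,…,y_n))` for `0 ≤ k ≤ n` (so `c_0 = 1`), and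
`c_k := 0` otherwise (type `Bₙ` normalization). -/
noncomputable def cB (n : ℕ) (k : ℤ) : MvPolynomial (Fin n ⊕ Fin n) ℚ :=
  if 0 ≤ k ∧ k ≤ (n : ℤ) then
    C (1 / 2 : ℚ) *
      (rename Sum.inl (esymm (Fin n) ℚ k.toNat) + rename Sum.inr (esymm (Fin n) ℚ k.toNat))
  else 0

/-- `Γ_n := det((c_{n+1+j−2i})_{1≤i,j≤n})`; with `0`-indexed `i, j` the entry is
`c_{n+j−2i}`. -/
noncomputable def GammaB (n : ℕ) : MvPolynomial (Fin n ⊕ Fin n) ℚ :=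
  (Matrix.of fun i j : Fin n => cB n ((n : ℤ) + (j : ℤ) - 2 * (i : ℤ))).det

lemma range_two_mul_sum {R : Type*} [CommRing R] (n : ℕ) (f : ℕ → R) :
    ∑ s ∈ range (2 * n), f s = ∑ i ∈ range n, (f (2 * i) + f (2 * i + 1)) := by
  induction n with
  | zero => simp
  | succ k ih =>
    rw [show 2 * (k + 1) = 2 * k + 1 + 1 by ring, sum_range_succ, sum_range_succ, ih,
      sum_range_succ, add_assoc]

lemma key_aux {R : Type*} [CommRing R] (n : ℕ) (c : ℤ → R)
    (hc : ∀ k, ¬(0 ≤ k ∧ k ≤ (n : ℤ)) → c k = 0) (x : R) (j : ℕ) (hj : j < n) :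
    x ^ j * ∑ m ∈ range (n + 1), c m * x ^ (n - m)
      = ∑ s ∈ range (2 * n), c ((n : ℤ) + j - s) * x ^ s := by
  rw [mul_sum, ← sum_range_reflect]
  have h : ∀ s ∈ range (2 * n), s ∉ Finset.Ico j (j + n + 1) →
      c ((n : ℤ) + j - s) * x ^ s = 0 := by
    intro s _ h2
    rw [hc, zero_mul]
    simp only [Finset.mem_Ico] at h2
    omega
  rw [← sum_subset (s₁ := Finset.Ico j (j + n + 1)) _ h, Finset.sum_Ico_eq_sum_range]
  · rw [show j + n + 1 - j = n + 1 by omega]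
    refine sum_congr rfl fun m hm => ?_
    have hm' : m < n + 1 := by simpa using hm
    rw [show n + 1 - 1 - m = n - m by omega, show n - (n - m) = m by omega, pow_add,
      show ((n : ℤ) + j - ((j + m : ℕ) : ℤ)) = ((n - m : ℕ) : ℤ) by omega]
    ring
  · intro s hs
    simp only [Finset.mem_Ico, Finset.mem_range] at *
    omega

lemma key_sum {R : Type*} [CommRing R] (n : ℕ) (c : ℤ → R)
    (hc : ∀ k, ¬(0 ≤ k ∧ k ≤ (n : ℤ)) → c k = 0) (x : R) (j : Fin n) :
    2 * ∑ i : Fin n, x ^ (2 * (i : ℕ)) * c ((n : ℤ) + (j : ℤ) - 2 * (i : ℤ))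
      = x ^ (j : ℕ) * ∑ m ∈ range (n + 1), c m * x ^ (n - m)
        + (-x) ^ (j : ℕ) * ∑ m ∈ range (n + 1), c m * (-x) ^ (n - m) := by
  rw [key_aux n c hc x j j.2, key_aux n c hc (-x) j j.2, ← sum_add_distrib,
    range_two_mul_sum, mul_sum,
    Fin.sum_univ_eq_sum_range
      (fun i => 2 * (x ^ (2 * i) * c ((n : ℤ) + ((j : ℕ) : ℤ) - 2 * (i : ℤ)))) n]
  refine sum_congr rfl fun i _ => ?_
  rw [Even.neg_pow (even_two_mul i), Odd.neg_pow (odd_two_mul_add_one i)]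
  push_cast
  ring

lemma prod_esymm {R : Type*} [CommRing R] (n : ℕ) (x : Fin n → R) (t : R) :
    ∏ i, (t + x i) = ∑ m ∈ range (n + 1), (univ.val.map x).esymm m * t ^ (n - m) := by
  have h := congrArg (Polynomial.eval t)
    (Multiset.prod_X_add_C_eq_sum_esymm (univ.val.map x))
  rw [Polynomial.eval_multiset_prod] at h
  simpa [Polynomial.eval_finsetSum, Function.comp_def, List.prod_ofFn] using h

lemma aeval_cB {R : Type*} [CommRing R] [Algebra ℚ R] (n : ℕ) (x y : Fin n → R) (k : ℤ) :
    2 * aeval (Sum.elim x y) (cB n k) = if 0 ≤ k ∧ k ≤ (n : ℤ) then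
      (univ.val.map x).esymm k.toNat + (univ.val.map y).esymm k.toNat else 0 := by
  have h2 : (2 : R) * algebraMap ℚ R (1 / 2) = 1 := by
    rw [← map_ofNat (algebraMap ℚ R) 2, ← map_mul]; norm_num
  unfold cB
  split_ifs
  · rw [map_mul, map_add, aeval_rename, aeval_rename, Sum.elim_comp_inl, Sum.elim_comp_inr,
      aeval_esymm_eq_multiset_esymm, aeval_esymm_eq_multiset_esymm, ← mul_assoc]
    rw [← algebraMap_eq, AlgHom.commutes, h2, one_mul]
  · simp

lemma aeval_cB_sum {R : Type*} [CommRing R] [Algebra ℚ R] (n : ℕ) (x y : Fin n → R) (t : R) :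
    2 * ∑ m ∈ range (n + 1), aeval (Sum.elim x y) (cB n m) * t ^ (n - m)
      = ∏ i, (t + x i) + ∏ i, (t + y i) := by
  rw [prod_esymm, prod_esymm, ← sum_add_distrib, mul_sum]
  refine sum_congr rfl fun m hm => ?_
  have hm' : m < n + 1 := by simpa using hm
  rw [← mul_assoc, aeval_cB, if_pos (by omega)]
  simp [add_mul]

lemma four_sum {R : Type*} [CommRing R] [Algebra ℚ R] (n : ℕ) (x y : Fin n → R) (t : R)
    (j : Fin n) :
    4 * ∑ i : Fin n, t ^ (2 * (i : ℕ)) *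
        aeval (Sum.elim x y) (cB n ((n : ℤ) + (j : ℤ) - 2 * (i : ℤ)))
      = t ^ (j : ℕ) * (∏ i, (t + x i) + ∏ i, (t + y i))
        + (-t) ^ (j : ℕ) * (∏ i, (-t + x i) + ∏ i, (-t + y i)) := by
  have := key_sum n (fun k => aeval (Sum.elim x y) (cB n k))
    (fun k hk => by simp [cB, hk]) t j
  rw [← aeval_cB_sum, ← aeval_cB_sum]
  linear_combination 2 * this

lemma aeval_GammaB {R : Type*} [CommRing R] [Algebra ℚ R] (n : ℕ) (x y : Fin n → R) :
    aeval (Sum.elim x y) (GammaB n) = (Matrix.of fun i j : Fin n =>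
      aeval (Sum.elim x y) (cB n ((n : ℤ) + (j : ℤ) - 2 * (i : ℤ)))).det := by
  rw [GammaB, AlgHom.map_det]
  rfl

/-- product over off-diagonal pairs -/
lemma prod_pairs {R : Type*} [CommRing R] (n : ℕ) (x : Fin n → R) :
    ∏ k, ∏ i ∈ univ.erase k, (x k + x i)
      = (∏ i : Fin n, ∏ j ∈ Finset.Ioi i, (x i + x j)) ^ 2 := by
  have h1 : ∀ k : Fin n, univ.erase k = Finset.Iio k ∪ Finset.Ioi k := by
    intro k; ext i; simp [lt_or_lt_iff_ne]
  have h2 : ∀ k : Fin n, Disjoint (Finset.Iio k) (Finset.Ioi k) := by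
    intro k
    rw [Finset.disjoint_left]
    intro i; simp only [Finset.mem_Iio, Finset.mem_Ioi]; omega
  simp_rw [h1, prod_union (h2 _), prod_mul_distrib, sq]
  congr 1
  rw [prod_comm' (t' := univ) (s' := fun i => Finset.Ioi i) (by simp)]
  exact prod_congr rfl fun i _ => prod_congr rfl fun j _ => add_comm _ _

lemma Gamma_id (n : ℕ) :
    aeval (Sum.elim (fun i => X i) fun j => (X j : MvPolynomial (Fin n) ℚ)) (GammaB n)
      = (∏ i : Fin n, ∏ j ∈ Finset.Ioi i, (X i + X j)) * ∏ i : Fin n, X i := by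
  set x : Fin n → MvPolynomial (Fin n) ℚ := fun i => X i with hx
  change aeval (Sum.elim x x) (GammaB n) =
    (∏ i : Fin n, ∏ j ∈ Finset.Ioi i, (x i + x j)) * ∏ i : Fin n, x i
  rw [aeval_GammaB]
  set M := Matrix.of fun i j : Fin n =>
      aeval (Sum.elim x x) (cB n ((n : ℤ) + (j : ℤ) - 2 * (i : ℤ))) with hM
  have hmul : Matrix.vandermonde (fun i => x i ^ 2) * M =
      Matrix.diagonal (fun k => x k * ∏ i ∈ univ.erase k, (x k + x i)) *
        Matrix.vandermonde x := by
    ext1 k j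
    rw [Matrix.mul_apply, Matrix.diagonal_mul]
    have h := four_sum n x x (x k) j
    have h0 : ∏ i, (- x k + x i) = 0 := prod_eq_zero (mem_univ k) (by simp)
    rw [h0, ← mul_prod_erase univ _ (mem_univ k)] at h
    have h4 : (4 : MvPolynomial (Fin n) ℚ) ≠ 0 := by norm_num
    apply mul_left_cancel₀ h4
    simp only [Matrix.vandermonde_apply, hM, Matrix.of_apply, ← pow_mul]
    rw [h]
    ring
  have hdet := congrArg Matrix.det hmul
  rw [Matrix.det_mul, Matrix.det_mul, Matrix.det_diagonal, Matrix.det_vandermonde,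
    Matrix.det_vandermonde, prod_mul_distrib, prod_pairs] at hdet
  have hv : ∏ i : Fin n, ∏ j ∈ Finset.Ioi i, (x j ^ 2 - x i ^ 2)
      = (∏ i : Fin n, ∏ j ∈ Finset.Ioi i, (x j - x i)) *
        ∏ i : Fin n, ∏ j ∈ Finset.Ioi i, (x i + x j) := by
    simp_rw [← prod_mul_distrib]
    exact prod_congr rfl fun i _ => prod_congr rfl fun j _ => by ring
  have hne : ∏ i : Fin n, ∏ j ∈ Finset.Ioi i, (x j ^ 2 - x i ^ 2) ≠ 0 := by
    refine prod_ne_zero_iff.2 fun i _ => prod_ne_zero_iff.2 fun j hj h => ?_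
    have hij : i ≠ j := (Finset.mem_Ioi.1 hj).ne
    have := congrArg (MvPolynomial.eval (fun a => if a = i then (1 : ℚ) else 0)) h
    simp [hx, hij.symm] at this
  apply mul_left_cancel₀ hne
  rw [hdet, hv]
  ring

lemma Gamma_zero {K : Type*} [Field K] [IsAlgClosed K] [Algebra ℚ K] (n : ℕ)
    (x y : Fin n → K) (π : Equiv.Perm (Fin n)) (ε : Fin n → ℚ)
    (hε : ∀ j, ε j = 1 ∨ ε j = -1) (hy : ∀ j, y j = algebraMap ℚ K (ε j) * x (π j))
    (j₀ : Fin n) (hj₀ : ε j₀ = -1) :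
    aeval (Sum.elim x y) (GammaB n) = 0 := by
  classical
  have : CharZero K := algebraRat.charZero K
  set I : Finset (Fin n) := univ.filter fun j => ε j = -1 with hI
  set A : Polynomial K := ∏ i ∈ I, (Polynomial.X + Polynomial.C (x (π i))) with hA
  set B : Polynomial K := ∏ i ∈ I, (Polynomial.X + Polynomial.C (-x (π i))) with hB
  have hAm : A.Monic := Polynomial.monic_prod_of_monic _ _ fun i _ => Polynomial.monic_X_add_C _
  have hBm : B.Monic := Polynomial.monic_prod_of_monic _ _ fun i _ => Polynomial.monic_X_add_C _
  have hAd : A.natDegree = #I := by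
    rw [hA, Polynomial.natDegree_prod_of_monic _ _ fun i _ => Polynomial.monic_X_add_C _]
    simp
  have hBd : B.natDegree = #I := by
    rw [hB, Polynomial.natDegree_prod_of_monic _ _ fun i _ => Polynomial.monic_X_add_C _]
    simp only [Polynomial.natDegree_X_add_C]; simp
  have hpos : 0 < #I := card_pos.2 ⟨j₀, by simp [hI, hj₀]⟩
  have hcoeff : (A + B).coeff #I = 2 := by
    rw [Polynomial.coeff_add]
    nth_rw 1 [← hAd]
    rw [← hBd, hAm.coeff_natDegree, hBm.coeff_natDegree]; norm_num
  have hdeg : (A + B).degree ≠ 0 := by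
    intro h
    have := Polynomial.coeff_eq_zero_of_degree_lt (p := A + B) (n := #I)
      (by rw [h]; exact_mod_cast hpos)
    rw [hcoeff] at this
    norm_num at this
  obtain ⟨t, ht⟩ := IsAlgClosed.exists_root (A + B) hdeg
  have hroot : ∏ i ∈ I, (t + x (π i)) + ∏ i ∈ I, (t - x (π i)) = 0 := by
    simpa [hA, hB, Polynomial.IsRoot, Polynomial.eval_prod, sub_eq_add_neg] using ht
  have hroot' : ∏ i ∈ I, (-t + x (π i)) + ∏ i ∈ I, (-t - x (π i)) = 0 := by
    have e1 : ∏ i ∈ I, (-t + x (π i)) = (-1) ^ #I * ∏ i ∈ I, (t - x (π i)) := by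
      rw [← prod_const, ← prod_mul_distrib]
      exact prod_congr rfl fun i _ => by ring
    have e2 : ∏ i ∈ I, (-t - x (π i)) = (-1) ^ #I * ∏ i ∈ I, (t + x (π i)) := by
      rw [← prod_const, ← prod_mul_distrib]
      exact prod_congr rfl fun i _ => by ring
    rw [e1, e2]
    linear_combination (-1) ^ #I * hroot
  have hfac : ∀ s : K, ∏ i ∈ I, (s + x (π i)) + ∏ i ∈ I, (s - x (π i)) = 0 →
      ∏ i, (s + x i) + ∏ i, (s + y i) = 0 := by
    intro s hs
    rw [← Equiv.prod_comp π (fun i => s + x i), ← prod_mul_prod_compl I,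
      ← prod_mul_prod_compl I (fun i => s + y i)]
    have e1 : ∏ i ∈ I, (s + y i) = ∏ i ∈ I, (s - x (π i)) := by
      refine prod_congr rfl fun i hi => ?_
      have : ε i = -1 := by simpa [hI] using hi
      rw [hy, this]; simp; ring
    have e2 : ∏ i ∈ Iᶜ, (s + y i) = ∏ i ∈ Iᶜ, (s + x (π i)) := by
      refine prod_congr rfl fun i hi => ?_
      have h1 : ¬ ε i = -1 := by simpa [hI] using hi
      rw [hy, (hε i).resolve_right h1]; simp
    rw [e1, e2, ← add_mul, hs, zero_mul]
  rw [aeval_GammaB]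
  apply Matrix.exists_vecMul_eq_zero_iff.1
  refine ⟨fun i => t ^ (2 * (i : ℕ)), ?_, ?_⟩
  · intro h
    have := congrFun h ⟨0, j₀.pos⟩
    simp at this
  · ext j
    have h := four_sum n x y t j
    rw [hfac t hroot, hfac (-t) hroot'] at h
    have h4 : (4 : K) ≠ 0 := by norm_num
    apply mul_left_cancel₀ h4
    simpa [Matrix.vecMul, dotProduct] using h

/-- type `Bₙ`.  For a signed permutation `w = (π, ε)` of `{1,…,n}`
(`ε j ∈ {1,−1}`) let `e_w` be the substitution fixing the `x_i` and sending
`y_j ↦ ε_j·x_{π(j)}`.  Then `e_id(Φ_n·Γ_n) = ∏_{i<j}(x_i−x_j)(x_i+x_j)·∏_i x_i`, the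
product of the positive roots of `SO_{2n+1}`, while `e_w(Φ_n·Γ_n) = 0` for every
`w ≠ id`. -/
theorem stmt_7 (n : ℕ) (hn : 1 ≤ n) :
    (aeval (Sum.elim (fun i => X i) fun j => (X j : MvPolynomial (Fin n) ℚ)))
        (PhiB n * GammaB n)
      = (∏ i : Fin n, ∏ j ∈ Finset.Ioi i, ((X i - X j) * (X i + X j))) *
          ∏ i : Fin n, X i
    ∧ ∀ (π : Equiv.Perm (Fin n)) (ε : Fin n → ℚ), (∀ j, ε j = 1 ∨ ε j = -1) →
        ¬(π = 1 ∧ ε = fun _ => 1) →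
        (aeval (Sum.elim (fun i => X i) fun j => C (ε j) * X (π j)))
            (PhiB n * GammaB n) = 0 := by
  constructor
  · rw [map_mul, Gamma_id]
    simp_rw [prod_mul_distrib]
    rw [← mul_assoc]
    congr 2
    simp [PhiB, map_prod]
  · intro π ε hε hne
    rw [map_mul]
    by_cases h : ∃ j₀, ε j₀ = -1
    · obtain ⟨j₀, hj₀⟩ := h
      apply mul_eq_zero_of_right
      let P := MvPolynomial (Fin n) ℚ
      let K := AlgebraicClosure (FractionRing P)
      have hinj : Function.Injective (algebraMap P K) := by
        rw [IsScalarTower.algebraMap_eq P (FractionRing P) K]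
        exact (algebraMap (FractionRing P) K).injective.comp
          (IsFractionRing.injective P (FractionRing P))
      apply hinj
      rw [map_zero]
      have := Gamma_zero (K := K) n (fun i => algebraMap P K (X i))
        (fun j => algebraMap P K (C (ε j) * X (π j))) π ε hε
        (fun j => by
          rw [map_mul, IsScalarTower.algebraMap_apply ℚ P K]; rfl) j₀ hj₀
      rw [← this, ← aeval_algebraMap_apply]
      congr 2
      funext i
      cases i <;> rfl
    · push Not at h
      have h1 : ∀ j, ε j = 1 := fun j => (hε j).resolve_right (h j)
      have hπ : π ≠ 1 := fun h => hne ⟨h, funext h1⟩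
      have : ∃ j, π j < j := by
        by_contra hcon
        push Not at hcon
        apply hπ
        have hs : ∑ j : Fin n, (j : ℕ) = ∑ j, (π j : ℕ) :=
          (Equiv.sum_comp π (fun j : Fin n => (j : ℕ))).symm
        have := (sum_eq_sum_iff_of_le fun j _ => Fin.le_def.1 (hcon j)).1 hs
        ext j
        simpa using (this j (mem_univ j)).symm
      obtain ⟨j, hj⟩ := this
      apply mul_eq_zero_of_left
      rw [PhiB, map_prod]
      apply prod_eq_zero (mem_univ (π j))
      rw [map_prod]
      apply prod_eq_zero (Finset.mem_Ioi.2 hj)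
      simp [h1]
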